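/- arXiv:0909.4232 — 2 statements merged into one kernel-verified Lean document; each statement's English description precedes it below -/
import Mathlib

section
/- For all real ν, ν', the weighted Wronskian-type boundary term at infinity vanishes: x · ( K_{iν}(x) · K_{iν'}'(x) − K_{iν'}(x) · K_{iν}'(x) ) → 0 as x → +∞, where ' denotes differentiation with respect to the argument. -/
open Real Filter

/-- The Macdonald function of imaginary order: `K_{iν}(x) = ∫_0^∞ e^{-x cosh t} cos(ν t) dt`. -/
noncomputable def Kim (ν x : ℝ) : ℝ :=
  ∫ t in Set.Ioi (0 : ℝ), Real.exp (-x * Real.cosh t) * Real.cos (ν * t)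

/-!
Differentiating under the integral sign inserts factors `-cosh t`. Since `cosh t ≥ 1`, we have
`e^{-x cosh t} ≤ e^{1-x} e^{-cosh t}` for `x ≥ 1`, so `K_{iν}` and all its derivatives are
`O(e^{-x})` at infinity and the boundary term is `O(x e^{-2x})`.
-/

open Asymptotics MeasureTheory ProbabilityTheory

theorem integrableOn_exp_neg_mul_cosh {x : ℝ} (hx : 0 < x) :
    IntegrableOn (fun t => exp (-x * cosh t)) (Set.Ioi 0) := by
  refine (exp_neg_integrableOn_Ioi 0 hx).mono' (by fun_prop) ?_
  filter_upwards [ae_restrict_mem measurableSet_Ioi] with t (ht : 0 < t)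
  have t_le_cosh : t ≤ cosh t := (self_le_sinh_iff.2 ht.le).trans (sinh_lt_cosh t).le
  rw [norm_of_nonneg (exp_nonneg _), exp_le_exp]
  exact mul_le_mul_of_nonpos_left t_le_cosh (neg_nonpos.2 hx.le)

theorem integrableOn_cosh_pow_mul_exp_neg_mul_cosh (n : ℕ) {x : ℝ} (hx : 0 < x) :
    IntegrableOn (fun t => cosh t ^ n * exp (-x * cosh t)) (Set.Ioi 0) := by
  have Iio_subset : Set.Iio 0 ⊆ integrableExpSet cosh (volume.restrict (Set.Ioi 0)) := by
    intro v (hv : v < 0)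
    simpa only [integrableExpSet, Set.mem_ofPred_eq, IntegrableOn, neg_neg] using
      integrableOn_exp_neg_mul_cosh (neg_pos.2 hv)
  exact integrable_pow_mul_exp_of_mem_interior_integrableExpSet
    (interior_maximal Iio_subset isOpen_Iio (neg_lt_zero.2 hx)) n

theorem exp_neg_mul_cosh_le {a x : ℝ} (hax : a ≤ x) (t : ℝ) :
    exp (-x * cosh t) ≤ exp (a - x) * exp (-a * cosh t) := by
  rw [← exp_add, exp_le_exp]
  linarith [mul_nonneg (sub_nonneg.2 hax) (sub_nonneg.2 (one_le_cosh t))]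

theorem norm_cosh_pow_mul_exp_mul_cos_le (n : ℕ) (ν x t : ℝ) :
    ‖cosh t ^ n * exp (-x * cosh t) * cos (ν * t)‖ ≤ cosh t ^ n * exp (-x * cosh t) := by
  have kernel_nonneg : 0 ≤ cosh t ^ n * exp (-x * cosh t) := by positivity
  rw [norm_mul, norm_of_nonneg kernel_nonneg]
  exact mul_le_of_le_one_right kernel_nonneg (abs_cos_le_one _)

/-- The integral `∫_0^∞ cosh^n t · e^{-x cosh t} cos(ν t) dt`, which for `x > 0` is `(-1)^n` times
the `n`-th derivative of `K_{iν}` at `x`. -/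
noncomputable def kimMoment (n : ℕ) (ν x : ℝ) : ℝ :=
  ∫ t in Set.Ioi (0 : ℝ), cosh t ^ n * exp (-x * cosh t) * cos (ν * t)

theorem kimMoment_zero_left (ν : ℝ) : kimMoment 0 ν = Kim ν := by
  ext x
  simp only [kimMoment, Kim, pow_zero, one_mul]

theorem hasDerivAt_kimMoment (n : ℕ) (ν : ℝ) {x : ℝ} (hx : 0 < x) :
    HasDerivAt (kimMoment n ν) (-kimMoment (n + 1) ν x) x := by
  have hasDerivAt_kernel (t y : ℝ) :
      HasDerivAt (fun y => cosh t ^ n * exp (-y * cosh t) * cos (ν * t))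
        (-(cosh t ^ (n + 1) * exp (-y * cosh t) * cos (ν * t))) y := by
    refine HasDerivAt.congr_deriv ((((hasDerivAt_neg y).mul_const (cosh t)).exp.const_mul
      (cosh t ^ n)).mul_const (cos (ν * t))) ?_
    ring
  have deriv_le (t : ℝ) : ∀ y ∈ Set.Ioi (x / 2),
      ‖-(cosh t ^ (n + 1) * exp (-y * cosh t) * cos (ν * t))‖ ≤
        cosh t ^ (n + 1) * exp (-(x / 2) * cosh t) := by
    intro y (hy : x / 2 < y)
    rw [norm_neg]
    refine (norm_cosh_pow_mul_exp_mul_cos_le (n + 1) ν y t).trans ?_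
    gcongr
  have integrable_kernel : IntegrableOn
      (fun t => cosh t ^ n * exp (-x * cosh t) * cos (ν * t)) (Set.Ioi 0) :=
    (integrableOn_cosh_pow_mul_exp_neg_mul_cosh n hx).mono' (by fun_prop)
      (.of_forall (norm_cosh_pow_mul_exp_mul_cos_le n ν x))
  have hasDerivAt_integral := (hasDerivAt_integral_of_dominated_loc_of_deriv_le
    (F := fun y t => cosh t ^ n * exp (-y * cosh t) * cos (ν * t))
    (μ := volume.restrict (Set.Ioi 0))
    (Ioi_mem_nhds (half_lt_self hx)) (.of_forall fun y => by fun_prop) integrable_kernel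
    (by fun_prop) (.of_forall deriv_le)
    (integrableOn_cosh_pow_mul_exp_neg_mul_cosh (n + 1) (half_pos hx))
    (.of_forall fun t y _ => hasDerivAt_kernel t y)).2
  rwa [integral_neg] at hasDerivAt_integral

theorem abs_kimMoment_le (n : ℕ) (ν : ℝ) {a x : ℝ} (ha : 0 < a) (hax : a ≤ x) :
    |kimMoment n ν x| ≤ exp (a - x) * kimMoment n 0 a := by
  have kernel_le (t : ℝ) : ‖cosh t ^ n * exp (-x * cosh t) * cos (ν * t)‖ ≤
      exp (a - x) * (cosh t ^ n * exp (-a * cosh t)) :=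
    calc ‖cosh t ^ n * exp (-x * cosh t) * cos (ν * t)‖
        ≤ cosh t ^ n * exp (-x * cosh t) := norm_cosh_pow_mul_exp_mul_cos_le n ν x t
      _ ≤ cosh t ^ n * (exp (a - x) * exp (-a * cosh t)) := by
        gcongr
        exact exp_neg_mul_cosh_le hax t
      _ = exp (a - x) * (cosh t ^ n * exp (-a * cosh t)) := by ring
  calc |kimMoment n ν x|
      ≤ ∫ t in Set.Ioi 0, exp (a - x) * (cosh t ^ n * exp (-a * cosh t)) :=
        norm_integral_le_of_norm_le
          ((integrableOn_cosh_pow_mul_exp_neg_mul_cosh n ha).const_mul _) (.of_forall kernel_le)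
    _ = exp (a - x) * kimMoment n 0 a := by
      simp only [integral_const_mul, kimMoment, zero_mul, cos_zero, mul_one]

theorem kimMoment_isBigO_exp_neg (n : ℕ) (ν : ℝ) :
    kimMoment n ν =O[atTop] fun x => exp (-x) := by
  refine .of_bound (exp 1 * kimMoment n 0 1) ?_
  filter_upwards [eventually_ge_atTop 1] with x hx
  calc ‖kimMoment n ν x‖ ≤ exp (1 - x) * kimMoment n 0 1 := abs_kimMoment_le n ν one_pos hx
    _ = exp 1 * kimMoment n 0 1 * ‖exp (-x)‖ := by
      rw [norm_of_nonneg (exp_nonneg _), sub_eq_add_neg, exp_add]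
      ring

theorem kim_isBigO_exp_neg (ν : ℝ) : Kim ν =O[atTop] fun x => exp (-x) :=
  kimMoment_zero_left ν ▸ kimMoment_isBigO_exp_neg 0 ν

theorem hasDerivAt_kim (ν : ℝ) {x : ℝ} (hx : 0 < x) :
    HasDerivAt (Kim ν) (-kimMoment 1 ν x) x :=
  kimMoment_zero_left ν ▸ hasDerivAt_kimMoment 0 ν hx

theorem deriv_kim_isBigO_exp_neg (ν : ℝ) : deriv (Kim ν) =O[atTop] fun x => exp (-x) := by
  refine (kimMoment_isBigO_exp_neg 1 ν).neg_left.congr' ?_ .rfl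
  filter_upwards [eventually_gt_atTop 0] with x hx
  exact (hasDerivAt_kim ν hx).deriv.symm

theorem macdonald_wronskian_vanishes_at_top (ν ν' : ℝ) :
    Tendsto (fun x => x * (Kim ν x * deriv (Kim ν') x - Kim ν' x * deriv (Kim ν) x))
      atTop (nhds 0) := by
  have wronskian_isBigO :
      (fun x => Kim ν x * deriv (Kim ν') x - Kim ν' x * deriv (Kim ν) x) =O[atTop]
        fun x => exp (-x) * exp (-x) :=
    ((kim_isBigO_exp_neg ν).mul (deriv_kim_isBigO_exp_neg ν')).sub
      ((kim_isBigO_exp_neg ν').mul (deriv_kim_isBigO_exp_neg ν))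
  have majorant_tendsto : Tendsto (fun x => x * (exp (-x) * exp (-x))) atTop (nhds 0) := by
    simpa only [pow_one, mul_assoc, mul_zero] using
      (tendsto_pow_mul_exp_neg_atTop_nhds_zero 1).mul tendsto_exp_neg_atTop_nhds_zero
  exact ((isBigO_refl (fun x : ℝ => x) atTop).mul wronskian_isBigO).trans_tendsto majorant_tendsto
end

section
/- For all real ν, ν' with ν > 0, ν' > 0 and ν ≠ ν', as ξ → 0+ one has ∫_ξ^∞ K_{iν}(x) K_{iν'}(x)/x dx = (π / (2 √(ν ν' sinh(πν) sinh(πν')))) · [ sin( −(ν−ν') log(ξ/2) + arg Γ(iν) − arg Γ(iν') ) / (ν−ν') + sin( −(ν+ν') log(ξ/2) + arg Γ(iν) + arg Γ(iν') ) / (ν+ν') ] + o(1); that is, the difference between the left-hand side and the bracketed expression tends to 0 as ξ → 0+. -/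
/-!
Write `K_s(x) = ½ ∫_ℝ e^{st - x cosh t} dt`. The recurrences of `K_s` show that
`(s' - s) K_s K_{s'} + x (K_{s+1} K_{s'} - K_s K_{s'+1})` is an antiderivative of
`(s'² - s²) K_s K_{s'} / x`; as it vanishes at `∞`, the integral over `[ξ, ∞)` is a boundary term
at `ξ`. For `s = iν` and `s' = iν'` this term is an expression in `Z_ν = ξ K_{1+iν}(ξ)` and
`Z_{ν'}`, because `Im Z_ν = ν K_{iν}(ξ)`.

The substitution `u = (x/2) eᵗ` exhibits `2 (x/2)^s K_s(x)` as the Mellin transform of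
`exp (-u - (x/2)²/u)` at `s`, so it tends to `Γ(s)` as `x → 0+` when `Re s > 0`. Working with order
`1 + iν` instead of `iν` puts us in this half-plane: `Z_ν ~ (ξ/2)^{-iν} Γ(1 + iν)`, with
`Γ(1 + iν) = iν Γ(iν)` and `|Γ(iν)|² = π / (ν sinh πν)`.
-/

open Real Filter MeasureTheory

open scoped Topology ComplexConjugate

/-- The integrand `e^{st - x cosh t}` of the Macdonald function `macdonaldK s x`. -/
noncomputable def macdonaldKernel (s : ℂ) (x t : ℝ) : ℂ :=
  Complex.exp (s * t - x * Complex.cosh t)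

/-- The Macdonald function `K_s(x) = ½ ∫_ℝ e^{st - x cosh t} dt` of complex order `s`. Integrating
over the whole line makes the integrand an exponential, so that the recurrences come without
boundary terms. The integral converges only for `0 < x`. -/
noncomputable def macdonaldK (s : ℂ) (x : ℝ) : ℂ :=
  2⁻¹ * ∫ t, macdonaldKernel s x t

/-- The boundary datum `x K_{1+iν}(x)` of the Macdonald functions of orders `±iν`: its imaginary
part is `ν K_{iν}(x)`, and its real part is `-x K_{iν}'(x)`. -/
noncomputable def macdonaldBoundary (ν x : ℝ) : ℂ :=
  x * macdonaldK (ν * Complex.I + 1) x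

lemma sq_le_four_mul_cosh (t : ℝ) : t ^ 2 ≤ 4 * Real.cosh t := by
  have h := Real.quadratic_le_exp_of_nonneg (abs_nonneg t)
  rw [← Real.cosh_abs t, Real.cosh_eq, ← sq_abs t]
  linarith [abs_nonneg t, Real.exp_pos (-|t|)]

@[fun_prop]
lemma continuous_macdonaldKernel (s : ℂ) (x : ℝ) : Continuous (macdonaldKernel s x) := by
  unfold macdonaldKernel
  fun_prop

lemma norm_macdonaldKernel (s : ℂ) (x t : ℝ) :
    ‖macdonaldKernel s x t‖ = Real.exp (s.re * t - x * Real.cosh t) := by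
  simp [macdonaldKernel, Complex.norm_exp]

lemma cosh_mul_macdonaldKernel (s : ℂ) (x t : ℝ) :
    Complex.cosh t * macdonaldKernel s x t =
      2⁻¹ * (macdonaldKernel (s + 1) x t + macdonaldKernel (s - 1) x t) := by
  simp only [macdonaldKernel, Complex.cosh, Complex.exp_sub, add_mul, sub_mul, Complex.exp_add,
    Complex.exp_neg, one_mul]
  ring

lemma sinh_mul_macdonaldKernel (s : ℂ) (x t : ℝ) :
    Complex.sinh t * macdonaldKernel s x t =
      2⁻¹ * (macdonaldKernel (s + 1) x t - macdonaldKernel (s - 1) x t) := by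
  simp only [macdonaldKernel, Complex.sinh, Complex.exp_sub, add_mul, sub_mul, Complex.exp_add,
    Complex.exp_neg, one_mul]
  ring

section Recurrence

variable (s : ℂ) {x : ℝ}

lemma integrable_macdonaldKernel (hx : 0 < x) : Integrable (macdonaldKernel s x) := by
  have hgauss := integrable_cexp_quadratic (b := ((x / 4 : ℝ) : ℂ))
    (by rw [Complex.ofReal_re]; positivity) s 0
  refine hgauss.mono (by fun_prop) (.of_forall fun t ↦ ?_)
  have hre : (-((x / 4 : ℝ) : ℂ) * t ^ 2 + s * t + 0).re = -(x / 4) * t ^ 2 + s.re * t := by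
    simp [← Complex.ofReal_pow]
  rw [norm_macdonaldKernel, Complex.norm_exp, Real.exp_le_exp, hre]
  nlinarith [sq_le_four_mul_cosh t]

lemma integrable_cosh_mul_macdonaldKernel (hx : 0 < x) :
    Integrable fun t : ℝ ↦ Complex.cosh t * macdonaldKernel s x t := by
  simp_rw [cosh_mul_macdonaldKernel]
  exact ((integrable_macdonaldKernel _ hx).add (integrable_macdonaldKernel _ hx)).const_mul _

lemma integral_cosh_mul_macdonaldKernel (hx : 0 < x) :
    ∫ t : ℝ, Complex.cosh t * macdonaldKernel s x t =
      macdonaldK (s + 1) x + macdonaldK (s - 1) x := by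
  simp_rw [cosh_mul_macdonaldKernel]
  rw [integral_const_mul, integral_add (integrable_macdonaldKernel _ hx)
    (integrable_macdonaldKernel _ hx), mul_add, macdonaldK, macdonaldK]

lemma integrable_sinh_mul_macdonaldKernel (hx : 0 < x) :
    Integrable fun t : ℝ ↦ Complex.sinh t * macdonaldKernel s x t := by
  simp_rw [sinh_mul_macdonaldKernel]
  exact ((integrable_macdonaldKernel _ hx).sub (integrable_macdonaldKernel _ hx)).const_mul _

lemma integral_sinh_mul_macdonaldKernel (hx : 0 < x) :
    ∫ t : ℝ, Complex.sinh t * macdonaldKernel s x t =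
      macdonaldK (s + 1) x - macdonaldK (s - 1) x := by
  simp_rw [sinh_mul_macdonaldKernel]
  rw [integral_const_mul, integral_sub (integrable_macdonaldKernel _ hx)
    (integrable_macdonaldKernel _ hx), mul_sub, macdonaldK, macdonaldK]

lemma hasDerivAt_macdonaldKernel (x t : ℝ) :
    HasDerivAt (macdonaldKernel s x)
      (s * macdonaldKernel s x t - x * (Complex.sinh t * macdonaldKernel s x t)) t := by
  have h := (((hasDerivAt_id (t : ℂ)).const_mul s).sub
    ((Complex.hasDerivAt_cosh t).const_mul (x : ℂ))).cexp.comp_ofReal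
  exact h.congr_deriv (by simp only [macdonaldKernel, Pi.sub_apply, id]; ring)

lemma two_mul_mul_macdonaldK (hx : 0 < x) :
    2 * s * macdonaldK s x = x * (macdonaldK (s + 1) x - macdonaldK (s - 1) x) := by
  have hint := (integrable_macdonaldKernel s hx).const_mul s
  have hint' := (integrable_sinh_mul_macdonaldKernel s hx).const_mul (x : ℂ)
  have h := integral_eq_zero_of_hasDerivAt_of_integrable (hasDerivAt_macdonaldKernel s x)
    (hint.sub hint') (integrable_macdonaldKernel s hx)
  rw [integral_sub hint hint', integral_const_mul, integral_const_mul,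
    integral_sinh_mul_macdonaldKernel s hx] at h
  rw [macdonaldK]
  linear_combination h

lemma hasDerivAt_macdonaldK (hx : 0 < x) :
    HasDerivAt (macdonaldK s) (-(macdonaldK (s + 1) x + macdonaldK (s - 1) x) / 2) x := by
  have h := (hasDerivAt_integral_of_dominated_loc_of_deriv_le (μ := volume)
    (F := macdonaldKernel s)
    (F' := fun y t : ℝ ↦ -(Complex.cosh t * macdonaldKernel s y t))
    (bound := fun t : ℝ ↦ ‖Complex.cosh t * macdonaldKernel s (x / 2) t‖)
    (Ioi_mem_nhds (half_lt_self hx)) (.of_forall fun y ↦ by fun_prop)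
    (integrable_macdonaldKernel s hx) (by fun_prop) ?_
    (integrable_cosh_mul_macdonaldKernel s (half_pos hx)).norm ?_).2
  · refine (h.const_mul 2⁻¹).congr_deriv ?_
    rw [integral_neg, integral_cosh_mul_macdonaldKernel s hx]
    ring
  · refine .of_forall fun t y (hy : x / 2 < y) ↦ ?_
    rw [norm_neg, norm_mul, norm_mul, norm_macdonaldKernel, norm_macdonaldKernel]
    have := Real.cosh_pos t
    gcongr
  · refine .of_forall fun t y _ ↦ ?_
    have h := (((hasDerivAt_id (y : ℂ)).mul_const (Complex.cosh t)).const_sub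
      (s * t)).cexp.comp_ofReal
    exact h.congr_deriv (by simp only [macdonaldKernel, id]; ring)

lemma hasDerivAt_macdonaldK_of_add_one (hx : 0 < x) :
    HasDerivAt (macdonaldK s) (s / x * macdonaldK s x - macdonaldK (s + 1) x) x := by
  refine (hasDerivAt_macdonaldK s hx).congr_deriv ?_
  have : (x : ℂ) ≠ 0 := by exact_mod_cast hx.ne'
  field_simp
  linear_combination -two_mul_mul_macdonaldK s hx

lemma hasDerivAt_macdonaldK_of_sub_one (hx : 0 < x) :
    HasDerivAt (macdonaldK s) (-(s / x * macdonaldK s x) - macdonaldK (s - 1) x) x := by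
  refine (hasDerivAt_macdonaldK s hx).congr_deriv ?_
  have : (x : ℂ) ≠ 0 := by exact_mod_cast hx.ne'
  field_simp
  linear_combination two_mul_mul_macdonaldK s hx

end Recurrence

lemma macdonaldK_neg (s : ℂ) (x : ℝ) : macdonaldK (-s) x = macdonaldK s x := by
  rw [macdonaldK, macdonaldK, ← integral_neg_eq_self (macdonaldKernel s x)]
  simp [macdonaldKernel]

lemma macdonaldK_conj (s : ℂ) (x : ℝ) : macdonaldK (conj s) x = conj (macdonaldK s x) := by
  simp [macdonaldK, macdonaldKernel, ← integral_conj, ← Complex.exp_conj, ← Complex.cosh_conj,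
    Complex.conj_ofNat]

section Wronskian

lemma isBigO_macdonaldK (s : ℂ) : macdonaldK s =O[atTop] fun x ↦ Real.exp (-x) := by
  have hint := (integrable_macdonaldKernel s one_pos).norm
  refine .of_bound (2⁻¹ * (Real.exp 1 * ∫ t, ‖macdonaldKernel s 1 t‖))
    ((eventually_ge_atTop 1).mono fun x hx ↦ ?_)
  have hbound : ‖∫ t, macdonaldKernel s x t‖ ≤
      ∫ t, Real.exp (1 + -x) * ‖macdonaldKernel s 1 t‖ := by
    refine norm_integral_le_of_norm_le (hint.const_mul _) (.of_forall fun t ↦ ?_)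
    rw [norm_macdonaldKernel, norm_macdonaldKernel, ← Real.exp_add, Real.exp_le_exp]
    nlinarith [Real.one_le_cosh t]
  rw [integral_const_mul, Real.exp_add] at hbound
  rw [macdonaldK, norm_mul, norm_inv, RCLike.norm_ofNat, Real.norm_of_nonneg (Real.exp_pos _).le]
  linarith

lemma tendsto_macdonaldK_atTop (s : ℂ) : Tendsto (macdonaldK s) atTop (𝓝 0) :=
  (isBigO_macdonaldK s).trans_tendsto Real.tendsto_exp_neg_atTop_nhds_zero

lemma tendsto_mul_macdonaldK_atTop (s : ℂ) :
    Tendsto (fun x : ℝ ↦ x * macdonaldK s x) atTop (𝓝 0) := by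
  have hx : (fun x : ℝ ↦ (x : ℂ)) =O[atTop] fun x : ℝ ↦ x :=
    .of_bound' (.of_forall fun x ↦ (Complex.norm_real x).le)
  refine (hx.mul (isBigO_macdonaldK s)).trans_tendsto ?_
  simpa using Real.tendsto_pow_mul_exp_neg_atTop_nhds_zero 1

lemma integrableOn_macdonaldK_mul_div (s s' : ℂ) {ξ : ℝ} (hξ : 0 < ξ) :
    IntegrableOn (fun x : ℝ ↦ macdonaldK s x * macdonaldK s' x / x) (Set.Ioi ξ) := by
  have hcont : ContinuousOn (fun x : ℝ ↦ macdonaldK s x * macdonaldK s' x / x) (Set.Ici ξ) := by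
    intro x hx
    have hx₀ : 0 < x := hξ.trans_le hx
    exact (((hasDerivAt_macdonaldK s hx₀).continuousAt.mul
      (hasDerivAt_macdonaldK s' hx₀).continuousAt).div Complex.continuous_ofReal.continuousAt
        (by exact_mod_cast hx₀.ne')).continuousWithinAt
  have hbounded : (fun x : ℝ ↦ macdonaldK s' x / x) =O[atTop] fun _ ↦ (1 : ℝ) := by
    have hinv : Tendsto (fun x : ℝ ↦ (x : ℂ)⁻¹) atTop (𝓝 0) := by
      simpa [Function.comp_def] using
        (Complex.continuous_ofReal.tendsto 0).comp tendsto_inv_atTop_zero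
    exact ((tendsto_macdonaldK_atTop s').mul hinv).isBigO_one ℝ
  have hdecay := (isBigO_macdonaldK s).mul hbounded
  simp only [mul_one, ← mul_div_assoc] at hdecay
  refine (integrable_norm_iff ((hcont.mono Set.Ioi_subset_Ici_self).aestronglyMeasurable
    measurableSet_Ioi)).1 (integrable_of_isBigO_exp_neg one_pos hcont.norm ?_)
  simpa using hdecay.norm_left

lemma hasDerivAt_macdonaldK_wronskian (s s' : ℂ) {x : ℝ} (hx : 0 < x) :
    HasDerivAt (fun x : ℝ ↦ (s' - s) * (macdonaldK s x * macdonaldK s' x) +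
        x * (macdonaldK (s + 1) x * macdonaldK s' x - macdonaldK s x * macdonaldK (s' + 1) x))
      ((s' ^ 2 - s ^ 2) * (macdonaldK s x * macdonaldK s' x / x)) x := by
  have hK := hasDerivAt_macdonaldK_of_add_one s hx
  have hK' := hasDerivAt_macdonaldK_of_add_one s' hx
  have hK₁ := hasDerivAt_macdonaldK_of_sub_one (s + 1) hx
  have hK₁' := hasDerivAt_macdonaldK_of_sub_one (s' + 1) hx
  refine (((hK.mul hK').const_mul (s' - s)).add
    ((hasDerivAt_id x).ofReal_comp.mul ((hK₁.mul hK').sub (hK.mul hK₁')))).congr_deriv ?_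
  have : (x : ℂ) ≠ 0 := by exact_mod_cast hx.ne'
  simp only [Pi.mul_apply, Pi.sub_apply, id, add_sub_cancel_right]
  push_cast
  field_simp
  ring

lemma integral_macdonaldK_mul_div (s s' : ℂ) {ξ : ℝ} (hξ : 0 < ξ) :
    (s ^ 2 - s' ^ 2) * ∫ x in Set.Ioi ξ, macdonaldK s x * macdonaldK s' x / x =
      (s' - s) * (macdonaldK s ξ * macdonaldK s' ξ) +
        ξ * (macdonaldK (s + 1) ξ * macdonaldK s' ξ - macdonaldK s ξ * macdonaldK (s' + 1) ξ) := by
  have hlim : Tendsto (fun x : ℝ ↦ (s' - s) * (macdonaldK s x * macdonaldK s' x) +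
      x * (macdonaldK (s + 1) x * macdonaldK s' x - macdonaldK s x * macdonaldK (s' + 1) x))
      atTop (𝓝 0) := by
    have h := (((tendsto_macdonaldK_atTop s).mul (tendsto_macdonaldK_atTop s')).const_mul
      (s' - s)).add (((tendsto_mul_macdonaldK_atTop (s + 1)).mul (tendsto_macdonaldK_atTop s')).sub
        ((tendsto_macdonaldK_atTop s).mul (tendsto_mul_macdonaldK_atTop (s' + 1))))
    simp only [mul_zero, sub_zero, add_zero] at h
    exact h.congr fun x ↦ by ring
  have h := integral_Ioi_of_hasDerivAt_of_tendsto'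
    (fun x hx ↦ hasDerivAt_macdonaldK_wronskian s s' (hξ.trans_le hx))
    ((integrableOn_macdonaldK_mul_div s s' hξ).const_mul _) hlim
  rw [integral_const_mul] at h
  linear_combination -h

end Wronskian

section SmallArgument

lemma mellin_eq_integral_exp {E : Type*} [NormedAddCommGroup E] [NormedSpace ℂ E]
    (f : ℝ → E) (s : ℂ) :
    mellin f s = ∫ t : ℝ, Complex.exp (s * t) • f (Real.exp t) := by
  rw [mellin, ← Real.range_exp, ← Set.image_univ,
    integral_image_eq_integral_abs_deriv_smul .univ
      (fun t _ ↦ (Real.hasDerivAt_exp t).hasDerivWithinAt) Real.exp_injective.injOn,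
    setIntegral_univ]
  refine integral_congr_ae (.of_forall fun t ↦ ?_)
  have hcpow : (Real.exp t : ℂ) ^ (s - 1) = Complex.exp (t * (s - 1)) := by
    rw [Complex.cpow_def_of_ne_zero (by exact_mod_cast (Real.exp_pos t).ne'),
      ← Complex.ofReal_log (Real.exp_pos t).le, Real.log_exp]
  dsimp only
  rw [abs_of_pos (Real.exp_pos t), ← Complex.coe_smul, smul_smul, hcpow, Complex.ofReal_exp,
    ← Complex.exp_add]
  ring_nf

lemma mellin_exp_neg_add_sq_div (s : ℂ) {x : ℝ} (hx : 0 < x) :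
    mellin (fun u ↦ (Real.exp (-(u + (x / 2) ^ 2 / u)) : ℂ)) s =
      2 * ((x / 2 : ℝ) ^ s * macdonaldK s x) := by
  have hx2 : 0 < x / 2 := half_pos hx
  have hexp (t : ℝ) : -(x / 2 * Real.exp t + (x / 2) ^ 2 / (x / 2 * Real.exp t)) =
      -(x * Real.cosh t) := by
    rw [Real.cosh_eq, Real.exp_neg]
    field_simp
  have hscale := mellin_comp_mul_left (fun u ↦ (Real.exp (-(u + (x / 2) ^ 2 / u)) : ℂ)) s hx2
  have hpow : ((x / 2 : ℝ) : ℂ) ^ s ≠ 0 := by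
    simp [Complex.cpow_eq_zero_iff, hx.ne']
  have hK : ∫ t : ℝ, Complex.exp (s * t) * (Real.exp (-(x * Real.cosh t)) : ℂ) =
      2 * macdonaldK s x := by
    simp [macdonaldK, macdonaldKernel, sub_eq_add_neg, Complex.exp_add]
  rw [mellin_eq_integral_exp] at hscale
  simp only [hexp, Complex.cpow_neg, smul_eq_mul, hK] at hscale
  rw [mul_left_comm, hscale, mul_inv_cancel_left₀ hpow]

lemma tendsto_mellin_exp_neg_add_sq_div {s : ℂ} (hs : 0 < s.re) :
    Tendsto (fun y : ℝ ↦ mellin (fun u ↦ (Real.exp (-(u + y ^ 2 / u)) : ℂ)) s) (𝓝 0)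
      (𝓝 (Complex.Gamma s)) := by
  rw [Complex.Gamma_eq_integral hs, Complex.GammaIntegral_eq_mellin]
  refine tendsto_integral_filter_of_dominated_convergence
    (fun u : ℝ ↦ ‖(Real.exp (-u) : ℂ) * (u : ℂ) ^ (s - 1)‖)
    (.of_forall fun y ↦ Measurable.aestronglyMeasurable (by fun_prop)) ?_
    (Complex.GammaIntegral_convergent hs).norm ?_
  · refine .of_forall fun y ↦ (ae_restrict_mem measurableSet_Ioi).mono fun u (hu : 0 < u) ↦ ?_
    rw [smul_eq_mul, mul_comm, norm_mul, norm_mul, Complex.norm_real, Complex.norm_real,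
      Real.norm_of_nonneg (Real.exp_pos _).le, Real.norm_of_nonneg (Real.exp_pos _).le]
    gcongr
    exact le_add_of_nonneg_right (by positivity)
  · refine .of_forall fun u ↦ ?_
    have hcont : Continuous fun y : ℝ ↦
        (u : ℂ) ^ (s - 1) • (Real.exp (-(u + y ^ 2 / u)) : ℂ) := by fun_prop
    simpa using hcont.tendsto 0

lemma tendsto_cpow_mul_macdonaldK {s : ℂ} (hs : 0 < s.re) :
    Tendsto (fun x : ℝ ↦ ((x / 2 : ℝ) : ℂ) ^ s * macdonaldK s x) (𝓝[>] 0)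
      (𝓝 (Complex.Gamma s / 2)) := by
  have hhalf : Tendsto (fun x : ℝ ↦ x / 2) (𝓝[>] 0) (𝓝 0) := by
    simpa using ((continuous_id.div_const (2 : ℝ)).tendsto 0).mono_left nhdsWithin_le_nhds
  refine (((tendsto_mellin_exp_neg_add_sq_div hs).comp hhalf).div_const 2).congr' ?_
  filter_upwards [self_mem_nhdsWithin] with x hx
  rw [Function.comp_apply, mellin_exp_neg_add_sq_div s hx, mul_div_cancel_left₀ _ two_ne_zero]

end SmallArgument

section ImaginaryOrder

lemma ofReal_Kim (ν : ℝ) {x : ℝ} (hx : 0 < x) :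
    (Kim ν x : ℂ) = macdonaldK (ν * Complex.I) x := by
  have hconj : conj (macdonaldK (ν * Complex.I) x) = macdonaldK (ν * Complex.I) x := by
    rw [← macdonaldK_conj, ← macdonaldK_neg (ν * Complex.I)]
    simp
  have hre (t : ℝ) : (macdonaldKernel (ν * Complex.I) x t).re =
      Real.exp (-x * Real.cosh |t|) * Real.cos (ν * |t|) := by
    rw [Real.cosh_abs, ← Real.cos_abs (ν * |t|), abs_mul, abs_abs, ← abs_mul, Real.cos_abs]
    simp [macdonaldKernel, Complex.exp_re]
  rw [← Complex.conj_eq_iff_re.1 hconj, Complex.ofReal_inj, macdonaldK,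
    show (2⁻¹ : ℂ) = (2⁻¹ : ℝ) by simp, Complex.re_ofReal_mul]
  have hint := integral_re (integrable_macdonaldKernel (ν * Complex.I) hx)
  simp only [RCLike.re_eq_complex_re, hre] at hint
  rw [← hint, integral_comp_abs (f := fun t ↦ Real.exp (-x * Real.cosh t) * Real.cos (ν * t)), Kim,
    inv_mul_cancel_left₀ two_ne_zero]

lemma macdonaldBoundary_neg (ν x : ℝ) :
    macdonaldBoundary (-ν) x = conj (macdonaldBoundary ν x) := by
  simp [macdonaldBoundary, ← macdonaldK_conj]

lemma im_macdonaldBoundary (ν : ℝ) {x : ℝ} (hx : 0 < x) :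
    (macdonaldBoundary ν x).im = ν * Kim ν x := by
  have hconj : macdonaldK (ν * Complex.I - 1) x = conj (macdonaldK (ν * Complex.I + 1) x) := by
    rw [← macdonaldK_conj, ← macdonaldK_neg]
    simp [sub_eq_neg_add]
  have h := two_mul_mul_macdonaldK (ν * Complex.I) hx
  rw [hconj, Complex.sub_conj, ← ofReal_Kim ν hx] at h
  rw [macdonaldBoundary, Complex.im_ofReal_mul, ← Complex.ofReal_inj]
  refine mul_left_cancel₀ (mul_ne_zero two_ne_zero Complex.I_ne_zero) ?_
  push_cast at h ⊢
  linear_combination -h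

lemma integral_Kim_mul_div {ν ν' : ℝ} (hν : ν ≠ 0) (hν' : ν' ≠ 0) (hsub : ν - ν' ≠ 0)
    (hadd : ν + ν' ≠ 0) {ξ : ℝ} (hξ : 0 < ξ) :
    ∫ x in Set.Ici ξ, Kim ν x * Kim ν' x / x =
      ((macdonaldBoundary ν ξ * conj (macdonaldBoundary ν' ξ)).im / (ν - ν') -
        (macdonaldBoundary ν ξ * macdonaldBoundary ν' ξ).im / (ν + ν')) / (2 * ν * ν') := by
  have hint : (∫ x in Set.Ioi ξ, macdonaldK (ν * Complex.I) x * macdonaldK (ν' * Complex.I) x / x)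
      = ((∫ x in Set.Ici ξ, Kim ν x * Kim ν' x / x : ℝ) : ℂ) := by
    rw [integral_Ici_eq_integral_Ioi, ← integral_complex_ofReal]
    refine setIntegral_congr_fun measurableSet_Ioi fun x hx ↦ ?_
    have hx₀ : 0 < x := hξ.trans hx
    simp [ofReal_Kim _ hx₀]
  have h := integral_macdonaldK_mul_div (ν * Complex.I) (ν' * Complex.I) hξ
  rw [hint, ← ofReal_Kim ν hξ, ← ofReal_Kim ν' hξ] at h
  set J := ∫ x in Set.Ici ξ, Kim ν x * Kim ν' x / x
  have hJ : (ν ^ 2 - ν' ^ 2) * J =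
      (macdonaldBoundary ν' ξ).re * Kim ν ξ - (macdonaldBoundary ν ξ).re * Kim ν' ξ := by
    have hcomplex : (ν ^ 2 - ν' ^ 2) * (J : ℂ) =
        macdonaldBoundary ν' ξ * Kim ν ξ - macdonaldBoundary ν ξ * Kim ν' ξ +
          (ν - ν') * Kim ν ξ * Kim ν' ξ * Complex.I := by
      rw [macdonaldBoundary, macdonaldBoundary]
      linear_combination -h + (ν ^ 2 - ν' ^ 2) * J * Complex.I_sq
    simpa [← Complex.ofReal_pow] using congrArg Complex.re hcomplex
  simp only [Complex.mul_im, Complex.conj_re, Complex.conj_im, im_macdonaldBoundary _ hξ]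
  field_simp
  linear_combination 2 * ν * ν' * hJ

end ImaginaryOrder

section Asymptotics

lemma tendsto_im_exp_mul_sub_mul_sin {ι : Type*} {l : Filter ι} {Y : ι → ℂ} {r α : ℝ}
    (hY : Tendsto Y l (𝓝 (r * Complex.exp (α * Complex.I)))) (θ : ι → ℝ) :
    Tendsto (fun i ↦ (Complex.exp (θ i * Complex.I) * Y i).im - r * Real.sin (θ i + α)) l
      (𝓝 0) := by
  have hbound (i : ι) : ‖(Complex.exp (θ i * Complex.I) * Y i).im - r * Real.sin (θ i + α)‖ ≤
      ‖Y i - r * Complex.exp (α * Complex.I)‖ := by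
    have hsin : r * Real.sin (θ i + α) =
        (Complex.exp (θ i * Complex.I) * (r * Complex.exp (α * Complex.I))).im := by
      rw [mul_left_comm, ← Complex.exp_add, ← add_mul, ← Complex.ofReal_add, Complex.im_ofReal_mul,
        Complex.exp_ofReal_mul_I_im]
    rw [hsin, ← Complex.sub_im, ← mul_sub, Real.norm_eq_abs]
    refine (Complex.abs_im_le_norm _).trans_eq ?_
    rw [norm_mul, Complex.norm_exp_ofReal_mul_I, one_mul]
  exact squeeze_zero_norm hbound (tendsto_iff_norm_sub_tendsto_zero.1 hY)

lemma sq_norm_Gamma_mul_I {ν : ℝ} (hν : ν ≠ 0) :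
    ‖Complex.Gamma (ν * Complex.I)‖ ^ 2 = π / (ν * Real.sinh (π * ν)) := by
  have hsinh : Real.sinh (π * ν) ≠ 0 := by simp [hν, Real.pi_ne_zero]
  have hreflect : Complex.Gamma (1 - ν * Complex.I) =
      -(ν * Complex.I) * conj (Complex.Gamma (ν * Complex.I)) := by
    rw [sub_eq_neg_add, Complex.Gamma_add_one _ (by simp [hν]), ← Complex.Gamma_conj]
    simp
  have h := Complex.Gamma_mul_Gamma_one_sub (ν * Complex.I)
  rw [hreflect, ← mul_assoc (π : ℂ), Complex.sin_mul_I, mul_left_comm, Complex.mul_conj',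
    ← Complex.ofReal_mul, ← Complex.ofReal_sinh,
    eq_div_iff (mul_ne_zero (by exact_mod_cast hsinh) Complex.I_ne_zero)] at h
  rw [eq_div_iff (mul_ne_zero hν hsinh), ← Complex.ofReal_inj]
  push_cast at h ⊢
  linear_combination h +
    ‖Complex.Gamma (ν * Complex.I)‖ ^ 2 * ν * Complex.sinh (π * ν) * Complex.I_sq

lemma norm_Gamma_mul_I_mul_norm_Gamma_mul_I {ν ν' : ℝ} (hν : ν ≠ 0) (hν' : ν' ≠ 0) :
    ‖Complex.Gamma (ν * Complex.I)‖ * ‖Complex.Gamma (ν' * Complex.I)‖ =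
      π / √(ν * ν' * Real.sinh (π * ν) * Real.sinh (π * ν')) := by
  rw [← Real.sqrt_sq (mul_nonneg (norm_nonneg _) (norm_nonneg _)), mul_pow,
    sq_norm_Gamma_mul_I hν, sq_norm_Gamma_mul_I hν', div_mul_div_comm, ← sq,
    Real.sqrt_div (sq_nonneg π), Real.sqrt_sq Real.pi_pos.le, mul_mul_mul_comm, ← mul_assoc]

lemma tendsto_exp_mul_log_mul_macdonaldBoundary (ν : ℝ) :
    Tendsto (fun ξ : ℝ ↦
        Complex.exp ((ν * Real.log (ξ / 2) : ℝ) * Complex.I) * macdonaldBoundary ν ξ)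
      (𝓝[>] 0) (𝓝 (Complex.Gamma (ν * Complex.I + 1))) := by
  have h := (tendsto_cpow_mul_macdonaldK (s := ν * Complex.I + 1) (by simp)).const_mul 2
  rw [mul_div_cancel₀ _ two_ne_zero] at h
  refine h.congr' ?_
  filter_upwards [self_mem_nhdsWithin] with ξ (hξ : 0 < ξ)
  have hhalf : ((ξ / 2 : ℝ) : ℂ) ≠ 0 := by exact_mod_cast (half_pos hξ).ne'
  rw [macdonaldBoundary, Complex.cpow_add _ _ hhalf, Complex.cpow_one,
    Complex.cpow_def_of_ne_zero hhalf, ← Complex.ofReal_log (half_pos hξ).le]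
  push_cast
  ring_nf

lemma tendsto_im_macdonaldBoundary_mul {ν ν' ρ ρ' α α' : ℝ} (hν : ν ≠ 0) (hν' : ν' ≠ 0)
    (hΓ : Complex.Gamma (ν * Complex.I) = ρ * Complex.exp (α * Complex.I))
    (hΓ' : Complex.Gamma (ν' * Complex.I) = ρ' * Complex.exp (α' * Complex.I)) :
    Tendsto (fun ξ : ℝ ↦ (macdonaldBoundary ν ξ * macdonaldBoundary ν' ξ).im +
        ν * ν' * (ρ * ρ') * Real.sin (-(ν + ν') * Real.log (ξ / 2) + α + α'))
      (𝓝[>] 0) (𝓝 0) := by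
  have h := (tendsto_exp_mul_log_mul_macdonaldBoundary ν).mul
    (tendsto_exp_mul_log_mul_macdonaldBoundary ν')
  have hlim : Complex.Gamma (ν * Complex.I + 1) * Complex.Gamma (ν' * Complex.I + 1) =
      (-(ν * ν' * (ρ * ρ')) : ℝ) * Complex.exp ((α + α' : ℝ) * Complex.I) := by
    rw [Complex.Gamma_add_one _ (by simp [hν]), Complex.Gamma_add_one _ (by simp [hν']), hΓ, hΓ',
      Complex.ofReal_add, add_mul, Complex.exp_add]
    push_cast
    linear_combination ν * ν' * (ρ * ρ') * Complex.exp (α * Complex.I) *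
      Complex.exp (α' * Complex.I) * Complex.I_sq
  rw [hlim] at h
  refine (tendsto_im_exp_mul_sub_mul_sin h
    (fun ξ ↦ -(ν + ν') * Real.log (ξ / 2))).congr fun ξ ↦ ?_
  have hphase : Complex.exp ((-(ν + ν') * Real.log (ξ / 2) : ℝ) * Complex.I) *
      (Complex.exp ((ν * Real.log (ξ / 2) : ℝ) * Complex.I) *
        Complex.exp ((ν' * Real.log (ξ / 2) : ℝ) * Complex.I)) = 1 := by
    rw [← Complex.exp_add, ← Complex.exp_add, ← Complex.exp_zero]
    push_cast
    ring_nf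
  rw [mul_mul_mul_comm, ← mul_assoc, hphase, one_mul, neg_mul, sub_neg_eq_add, ← add_assoc]

lemma tendsto_im_macdonaldBoundary_mul_conj {ν ν' ρ ρ' α α' : ℝ} (hν : ν ≠ 0) (hν' : ν' ≠ 0)
    (hΓ : Complex.Gamma (ν * Complex.I) = ρ * Complex.exp (α * Complex.I))
    (hΓ' : Complex.Gamma (ν' * Complex.I) = ρ' * Complex.exp (α' * Complex.I)) :
    Tendsto (fun ξ : ℝ ↦ (macdonaldBoundary ν ξ * conj (macdonaldBoundary ν' ξ)).im -
        ν * ν' * (ρ * ρ') * Real.sin (-(ν - ν') * Real.log (ξ / 2) + α - α'))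
      (𝓝[>] 0) (𝓝 0) := by
  have hΓneg : Complex.Gamma ((-ν' : ℝ) * Complex.I) =
      ρ' * Complex.exp ((-α' : ℝ) * Complex.I) := by
    have h := congrArg conj hΓ'
    rw [← Complex.Gamma_conj] at h
    simpa [← Complex.exp_conj] using h
  refine (tendsto_im_macdonaldBoundary_mul hν (neg_ne_zero.2 hν') hΓ hΓneg).congr fun ξ ↦ ?_
  rw [macdonaldBoundary_neg, ← sub_eq_add_neg, ← sub_eq_add_neg]
  ring

end Asymptotics

theorem macdonald_integral_asymptotic (ν ν' : ℝ) (hν : 0 < ν) (hν' : 0 < ν')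
    (hne : ν ≠ ν') :
    Tendsto (fun ξ : ℝ =>
        (∫ x in Set.Ici ξ, Kim ν x * Kim ν' x / x) -
          π / (2 * Real.sqrt (ν * ν' * Real.sinh (π * ν) * Real.sinh (π * ν'))) *
            (Real.sin (-(ν - ν') * Real.log (ξ / 2) +
                Complex.arg (Complex.Gamma (ν * Complex.I)) -
                Complex.arg (Complex.Gamma (ν' * Complex.I))) / (ν - ν') +
             Real.sin (-(ν + ν') * Real.log (ξ / 2) +
                Complex.arg (Complex.Gamma (ν * Complex.I)) +
                Complex.arg (Complex.Gamma (ν' * Complex.I))) / (ν + ν')))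
      (nhdsWithin 0 (Set.Ioi 0)) (nhds 0) := by
  have hsub : ν - ν' ≠ 0 := sub_ne_zero.2 hne
  have hadd : ν + ν' ≠ 0 := (add_pos hν hν').ne'
  have hΓ := (Complex.norm_mul_exp_arg_mul_I (Complex.Gamma (ν * Complex.I))).symm
  have hΓ' := (Complex.norm_mul_exp_arg_mul_I (Complex.Gamma (ν' * Complex.I))).symm
  have hconj := tendsto_im_macdonaldBoundary_mul_conj hν.ne' hν'.ne' hΓ hΓ'
  have hmul := tendsto_im_macdonaldBoundary_mul hν.ne' hν'.ne' hΓ hΓ'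
  have hlim := ((hconj.div_const (ν - ν')).sub (hmul.div_const (ν + ν'))).div_const (2 * ν * ν')
  simp only [zero_div, sub_zero] at hlim
  refine hlim.congr' ?_
  filter_upwards [self_mem_nhdsWithin] with ξ hξ
  rw [integral_Kim_mul_div hν.ne' hν'.ne' hsub hadd hξ, mul_comm 2 √_, ← div_div π,
    ← norm_Gamma_mul_I_mul_norm_Gamma_mul_I hν.ne' hν'.ne']
  field_simp
  ring
end
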